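/- Suppose g_r⁺ > 0 for every r = 1,…,s and the direction vector satisfies condition (9): y_{ro}/g_r⁺ ≤ 1 for every r. Let (λ*, τ⁻*, τ⁺*) ∈ F_o(g) minimize the linear objective ℓ over F_o(g). Then τ_r⁺* ≤ 1 for every r = 1,…,s; consequently 1 − (1/s)Σ_r τ_r⁺* ≥ 0, and if moreover 1 − (1/s)Σ_r τ_r⁺* > 0 then the super-efficiency index f(τ⁻*, τ⁺*) = (1 + (1/m)Σ_i τ_i⁻*)/(1 − (1/s)Σ_r τ_r⁺*) is at least 1 (well-definedness of the measure). -/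

import Mathlib

open Finset

/-- GDSE feasible-set predicate: the evaluated DMU has input vector `u` and output
vector `v`, benchmarked against the reference set `J = univ \ {o}` of the data
`x`, `y`, with RTS bounds `L ≤ Σλ ≤ U` and direction `(gm, gp)`. -/
def GDSEFeas {n m s : ℕ} (x : Fin n → Fin m → ℝ) (y : Fin n → Fin s → ℝ)
    (o : Fin n) (L U : ℝ) (gm : Fin m → ℝ) (gp : Fin s → ℝ)
    (u : Fin m → ℝ) (v : Fin s → ℝ)
    (lam : Fin n → ℝ) (tm : Fin m → ℝ) (tp : Fin s → ℝ) : Prop :=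
  (∀ j ∈ Finset.univ.erase o, 0 ≤ lam j) ∧
  (∀ i, 0 ≤ tm i) ∧ (∀ r, 0 ≤ tp r) ∧
  (∀ i, ∑ j ∈ Finset.univ.erase o, lam j * x j i ≤ u i + tm i * gm i) ∧
  (∀ r, v r - tp r * gp r ≤ ∑ j ∈ Finset.univ.erase o, lam j * y j r) ∧
  L ≤ ∑ j ∈ Finset.univ.erase o, lam j ∧
  ∑ j ∈ Finset.univ.erase o, lam j ≤ U

/-- The linear objective ℓ(τ⁻, τ⁺) = (1/m) Σᵢ τᵢ⁻ + (1/s) Σᵣ τᵣ⁺. -/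
noncomputable def linObj (m s : ℕ) (tm : Fin m → ℝ) (tp : Fin s → ℝ) : ℝ :=
  (1 / (m : ℝ)) * ∑ i, tm i + (1 / (s : ℝ)) * ∑ r, tp r

/-- The fractional objective f(τ⁻, τ⁺) = (1 + (1/m) Σᵢ τᵢ⁻) / (1 - (1/s) Σᵣ τᵣ⁺). -/
noncomputable def fracObj (m s : ℕ) (tm : Fin m → ℝ) (tp : Fin s → ℝ) : ℝ :=
  (1 + (1 / (m : ℝ)) * ∑ i, tm i) / (1 - (1 / (s : ℝ)) * ∑ r, tp r)

/-- The denominator of the fractional objective. -/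
noncomputable def fracDen (s : ℕ) (tp : Fin s → ℝ) : ℝ :=
  1 - (1 / (s : ℝ)) * ∑ r, tp r

/-- Values of the fractional objective over the feasible points with positive denominator. -/
def fracVals {n m s : ℕ} (x : Fin n → Fin m → ℝ) (y : Fin n → Fin s → ℝ)
    (o : Fin n) (L U : ℝ) (gm : Fin m → ℝ) (gp : Fin s → ℝ)
    (u : Fin m → ℝ) (v : Fin s → ℝ) : Set ℝ :=
  {w : ℝ | ∃ (lam : Fin n → ℝ) (tm : Fin m → ℝ) (tp : Fin s → ℝ),
    GDSEFeas x y o L U gm gp u v lam tm tp ∧ 0 < fracDen s tp ∧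
    w = fracObj m s tm tp}

/-- Values of the linear objective over the feasible points. -/
def linVals {n m s : ℕ} (x : Fin n → Fin m → ℝ) (y : Fin n → Fin s → ℝ)
    (o : Fin n) (L U : ℝ) (gm : Fin m → ℝ) (gp : Fin s → ℝ)
    (u : Fin m → ℝ) (v : Fin s → ℝ) : Set ℝ :=
  {w : ℝ | ∃ (lam : Fin n → ℝ) (tm : Fin m → ℝ) (tp : Fin s → ℝ),
    GDSEFeas x y o L U gm gp u v lam tm tp ∧ w = linObj m s tm tp}

/-- well-definedness: if gᵣ⁺ > 0 and y_{ro}/gᵣ⁺ ≤ 1 for every r,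
and (λ*, τ⁻*, τ⁺*) minimizes the linear objective over F_o(g), then τᵣ⁺* ≤ 1
for every r; consequently 1 - (1/s) Σᵣ τᵣ⁺* ≥ 0, and if this denominator is
positive then f(τ⁻*, τ⁺*) ≥ 1. -/
theorem stmt15 {n m s : ℕ}
    (x : Fin n → Fin m → ℝ) (y : Fin n → Fin s → ℝ) (o : Fin n)
    (hx : ∀ j i, 0 ≤ x j i) (hy : ∀ j r, 0 ≤ y j r)
    (L U : ℝ) (hL0 : 0 ≤ L) (hL1 : L ≤ 1) (hU : 1 ≤ U)
    (gm : Fin m → ℝ) (gp : Fin s → ℝ)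
    (hgm : ∀ i, 0 ≤ gm i) (hgp : ∀ r, 0 < gp r)
    (hcond : ∀ r, y o r / gp r ≤ 1)
    (lam : Fin n → ℝ) (tm : Fin m → ℝ) (tp : Fin s → ℝ)
    (hfeas : GDSEFeas x y o L U gm gp (x o) (y o) lam tm tp)
    (hopt : ∀ (lam' : Fin n → ℝ) (tm' : Fin m → ℝ) (tp' : Fin s → ℝ),
      GDSEFeas x y o L U gm gp (x o) (y o) lam' tm' tp' →
      linObj m s tm tp ≤ linObj m s tm' tp') :
    (∀ r : Fin s, tp r ≤ 1) ∧ 0 ≤ fracDen s tp ∧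
      (0 < fracDen s tp → 1 ≤ fracObj m s tm tp) := by
  obtain ⟨h1, h2, h3, h4, h5, h6, h7⟩ := hfeas
  have key : ∀ r : Fin s, tp r ≤ 1 := by
    intro r0
    by_contra hlt
    push Not at hlt
    have hs : (0 : ℝ) < s := by
      have : 0 < s := lt_of_le_of_lt (Nat.zero_le _) r0.isLt
      exact_mod_cast this
    have hf : GDSEFeas x y o L U gm gp (x o) (y o) lam tm (fun r => min (tp r) 1) := by
      refine ⟨h1, h2, fun r => le_min (h3 r) zero_le_one, h4, fun r => ?_, h6, h7⟩
      show y o r - min (tp r) 1 * gp r ≤ _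
      rcases le_total (tp r) 1 with h | h
      · rw [min_eq_left h]
        exact h5 r
      · rw [min_eq_right h]
        have h8 : y o r ≤ 1 * gp r := (div_le_iff₀ (hgp r)).mp (hcond r)
        have h9 : 0 ≤ ∑ j ∈ Finset.univ.erase o, lam j * y j r :=
          Finset.sum_nonneg fun j hj => mul_nonneg (h1 j hj) (hy j r)
        linarith
    have h10 := hopt _ _ _ hf
    unfold linObj at h10
    have h11 : ∑ r, min (tp r) 1 < ∑ r, tp r :=
      Finset.sum_lt_sum (fun r _ => min_le_left _ _)
        ⟨r0, Finset.mem_univ _, by rw [min_eq_right hlt.le]; exact hlt⟩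
    have h12 := mul_lt_mul_of_pos_left h11 (one_div_pos.mpr hs)
    linarith
  have hsum : 0 ≤ (1 / (s : ℝ)) * ∑ r, tp r :=
    mul_nonneg (by positivity) (Finset.sum_nonneg fun r _ => h3 r)
  have hsum' : 0 ≤ (1 / (m : ℝ)) * ∑ i, tm i :=
    mul_nonneg (by positivity) (Finset.sum_nonneg fun r _ => h2 r)
  refine ⟨key, ?_, fun hpos => ?_⟩
  · unfold fracDen
    have h13 : ∑ r, tp r ≤ (s : ℝ) := by
      have := Finset.sum_le_sum (fun r (_ : r ∈ Finset.univ) => key r)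
      simpa using this
    have h14 : (1 / (s : ℝ)) * ∑ r, tp r ≤ 1 := by
      rw [one_div, inv_mul_eq_div]
      exact div_le_one_of_le₀ h13 (by positivity)
    linarith
  · unfold fracDen at hpos
    unfold fracObj
    rw [le_div_iff₀ hpos]
    linarith
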